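/- (Continuous dependence on the data) Let u and ũ be solutions of the time-fractional diffusion equations (D_t^α u) = ∑_{j=1}^n ∂/∂x_j(p ∂u/∂x_j) − q u + F and (D_t^α ũ) = ∑_{j=1}^n ∂/∂x_j(p ∂ũ/∂x_j) − q ũ + F̃ in Ω_T = G×(0,T), with initial conditions u₀, ũ₀ on Ḡ and boundary conditions v, ṽ on S×[0,T], respectively. If sup_{Ḡ×[0,T]}|F−F̃| ≤ ε, sup_{Ḡ}|u₀−ũ₀| ≤ ε₀, and sup_{S×[0,T]}|v−ṽ| ≤ ε₁, then sup_{Ḡ×[0,T]}|u−ũ| ≤ max{ε₀, ε₁} + (T^α/Γ(1+α)) ε. -/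

import Mathlib

open MeasureTheory Set Filter Topology

/-- The Caputo fractional derivative of order `α` of `f` at `t`:
`(D^α f)(t) = (1/Γ(1−α)) ∫₀ᵗ (t−s)^{−α} f'(s) ds`. -/
noncomputable def caputo (α : ℝ) (f : ℝ → ℝ) (t : ℝ) : ℝ :=
  (1 / Real.Gamma (1 - α)) * ∫ s in (0:ℝ)..t, (t - s) ^ (-α) * deriv f s

/-- The elliptic part `div(p(x) grad w)(x) = ∑_j ∂/∂x_j (p(x) ∂w/∂x_j)(x)`. -/
noncomputable def divPGrad (n : ℕ) (p : (Fin n → ℝ) → ℝ) (w : (Fin n → ℝ) → ℝ)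
    (x : Fin n → ℝ) : ℝ :=
  ∑ j : Fin n, fderiv ℝ (fun y => p y * fderiv ℝ w y (Pi.single j 1)) x (Pi.single j 1)

/-- `u` is a (classical) solution of the time-fractional diffusion equation
`(D_t^α u)(x,t) = div(p grad u) − q u + F` in `Ω_T = G × (0,T)`:
`u ∈ C(Ḡ×[0,T])`, twice continuously differentiable in `x` on `G`, for each `x ∈ G`
the map `t ↦ u(x,t)` is `C¹` on `(0,T]` with integrable derivative, and the equation
holds pointwise in `Ω_T`. -/
def IsSolutionTFDE (n : ℕ) (α T : ℝ) (G : Set (Fin n → ℝ))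
    (p q : (Fin n → ℝ) → ℝ) (F : (Fin n → ℝ) → ℝ → ℝ)
    (u : (Fin n → ℝ) → ℝ → ℝ) : Prop :=
  ContinuousOn (fun z : (Fin n → ℝ) × ℝ => u z.1 z.2) (closure G ×ˢ Set.Icc 0 T) ∧
  (∀ t ∈ Set.Ioo (0:ℝ) T, ContDiffOn ℝ 2 (fun x => u x t) G) ∧
  (∀ x ∈ G, ContDiffOn ℝ 1 (u x) (Set.Ioc 0 T) ∧
    IntervalIntegrable (deriv (u x)) MeasureTheory.volume 0 T) ∧
  (∀ x ∈ G, ∀ t ∈ Set.Ioo (0:ℝ) T,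
    caputo α (u x) t = divPGrad n p (fun y => u y t) x - q x * u x t + F x t)

/-!
The equation is linear, so `w = u - u'` solves it with source `F - F'`. Subtracting the barrier
`ε t^α / Γ(1 + α)`, whose Caputo derivative is the constant `ε`, makes the source nonpositive, and
the weak maximum principle then bounds `w` minus the barrier by its values at `t = 0` and on the
lateral boundary. Exchanging `u` and `u'` gives the bound from below.

The maximum principle rests on Luchko's extremum principle: if `f` attains its maximum over
`[0, t]` at `t`, then `D^α f(t) ≥ t^(-α) (f(t) - f(0)) / Γ(1 - α)`. This comes from integrating by
parts against the kernel `(t - s)^(-α)`: the boundary term at `s = t` vanishes because `f` is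
differentiable there, and the remaining integrand has a sign. At an interior positive maximum the
elliptic part is nonpositive, so the equation forces the value there not to exceed the initial one.
-/

lemma integral_rpow_mul_sub_rpow {a b t : ℝ} (ha : 0 < a) (hb : 0 < b) (ht : 0 < t) :
    ∫ s in (0:ℝ)..t, s ^ (a - 1) * (t - s) ^ (b - 1) =
      t ^ (a + b - 1) * ProbabilityTheory.beta a b := by
  apply Complex.ofReal_injective
  rw [← intervalIntegral.integral_ofReal]
  calc ∫ s in (0:ℝ)..t, ((s ^ (a - 1) * (t - s) ^ (b - 1) : ℝ) : ℂ)
      = ∫ s in (0:ℝ)..t, (s : ℂ) ^ ((a : ℂ) - 1) * ((t : ℂ) - s) ^ ((b : ℂ) - 1) := by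
        refine intervalIntegral.integral_congr fun s hs => ?_
        rw [uIcc_of_le ht.le] at hs
        simp only [Complex.ofReal_mul, Complex.ofReal_cpow hs.1,
          Complex.ofReal_cpow (sub_nonneg.2 hs.2), Complex.ofReal_sub, Complex.ofReal_one]
    _ = (t : ℂ) ^ ((a : ℂ) + b - 1) * Complex.betaIntegral a b :=
        Complex.betaIntegral_scaled a b ht
    _ = ((t ^ (a + b - 1) * ProbabilityTheory.beta a b : ℝ) : ℂ) := by
        rw [Complex.betaIntegral_eq_Gamma_mul_div _ _ (by simpa using ha) (by simpa using hb),
          ProbabilityTheory.beta]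
        push_cast [Complex.ofReal_cpow ht.le, ← Complex.Gamma_ofReal]
        rfl

section Caputo

variable {α t T : ℝ} {f g : ℝ → ℝ}

lemma intervalIntegrable_sub_rpow_neg_mul {a : ℝ} (hα1 : α < 1) (hat : a < t)
    (hg : IntervalIntegrable g volume a t) (hgc : ContinuousOn g (Ioc a t)) :
    IntervalIntegrable (fun s => (t - s) ^ (-α) * g s) volume a t := by
  obtain ⟨m, ham, hmt⟩ := exists_between hat
  have left_half : IntervalIntegrable (fun s => (t - s) ^ (-α) * g s) volume a m := by
    refine (hg.mono_set ?_).continuousOn_mul ?_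
    · exact uIcc_subset_uIcc_left (by rw [uIcc_of_le hat.le]; exact ⟨ham.le, hmt.le⟩)
    · rw [uIcc_of_le ham.le]
      exact ContinuousOn.rpow_const (by fun_prop) fun s hs =>
        Or.inl (sub_pos.2 (hs.2.trans_lt hmt)).ne'
  have right_half : IntervalIntegrable (fun s => (t - s) ^ (-α) * g s) volume m t := by
    have kernel : IntervalIntegrable (fun s : ℝ => (t - s) ^ (-α)) volume m t := by
      simpa using (intervalIntegral.intervalIntegrable_rpow' (a := t - m) (b := 0)
        (r := -α) (by linarith)).comp_sub_left t
    refine kernel.mul_continuousOn (hgc.mono ?_)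
    rw [uIcc_of_le hmt.le]
    exact fun s hs => ⟨ham.trans_le hs.1, hs.2⟩
  exact left_half.trans right_half

/-- The functions on `[0, T]` with a Caputo derivative: `C¹` on `(0, T]` with integrable
derivative. This is the regularity in time that `IsSolutionTFDE` demands. -/
def CaputoRegular (T : ℝ) (f : ℝ → ℝ) : Prop :=
  ContDiffOn ℝ 1 f (Ioc 0 T) ∧ IntervalIntegrable (deriv f) volume 0 T

namespace CaputoRegular

lemma differentiableAt (hf : CaputoRegular T f) (ht : t ∈ Ioo 0 T) : DifferentiableAt ℝ f t :=
  (hf.1.contDiffAt (Ioc_mem_nhds ht.1 ht.2)).differentiableAt one_ne_zero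

lemma continuousOn_deriv (hf : CaputoRegular T f) : ContinuousOn (deriv f) (Ioo 0 T) :=
  (hf.1.mono Ioo_subset_Ioc_self).continuousOn_deriv_of_isOpen isOpen_Ioo le_rfl

lemma intervalIntegrable_kernel_mul_deriv (hf : CaputoRegular T f) (hα1 : α < 1)
    (ht : t ∈ Ioo 0 T) :
    IntervalIntegrable (fun s => (t - s) ^ (-α) * deriv f s) volume 0 t := by
  refine intervalIntegrable_sub_rpow_neg_mul hα1 ht.1 (hf.2.mono_set ?_) ?_
  · exact uIcc_subset_uIcc_left (by rw [uIcc_of_le (ht.1.trans ht.2).le]; exact ⟨ht.1.le, ht.2.le⟩)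
  · exact hf.continuousOn_deriv.mono fun s hs => ⟨hs.1, hs.2.trans_lt ht.2⟩

lemma eqOn_deriv_sub (hf : CaputoRegular T f) (hg : CaputoRegular T g) :
    EqOn (deriv fun s => f s - g s) (fun s => deriv f s - deriv g s) (Ioo 0 T) :=
  fun _ hs => deriv_fun_sub (hf.differentiableAt hs) (hg.differentiableAt hs)

lemma sub (hT : 0 ≤ T) (hf : CaputoRegular T f) (hg : CaputoRegular T g) :
    CaputoRegular T fun s => f s - g s := by
  refine ⟨hf.1.sub hg.1, (hf.2.sub hg.2).congr_uIoo ?_⟩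
  rw [uIoo_of_le hT]
  exact (hf.eqOn_deriv_sub hg).symm

lemma const_mul (hf : CaputoRegular T f) (c : ℝ) : CaputoRegular T fun s => c * f s := by
  refine ⟨contDiffOn_const.mul hf.1, ?_⟩
  rw [deriv_const_mul_field']
  exact hf.2.const_mul c

end CaputoRegular

lemma caputoRegular_rpow {β : ℝ} (hβ : 0 < β) : CaputoRegular T fun s => s ^ β := by
  refine ⟨contDiffOn_id.rpow_const_of_ne fun s hs => hs.1.ne', ?_⟩
  rw [Real.deriv_rpow_const']
  exact (intervalIntegral.intervalIntegrable_rpow' (by linarith)).const_mul β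

lemma caputo_sub (hα1 : α < 1) (ht : t ∈ Ioo 0 T) (hf : CaputoRegular T f)
    (hg : CaputoRegular T g) :
    caputo α (fun s => f s - g s) t = caputo α f t - caputo α g t := by
  simp only [caputo]
  rw [← mul_sub, ← intervalIntegral.integral_sub
    (hf.intervalIntegrable_kernel_mul_deriv hα1 ht) (hg.intervalIntegrable_kernel_mul_deriv hα1 ht)]
  congr 1
  refine intervalIntegral.integral_congr_Ioo_of_le ht.1.le fun s hs => ?_
  rw [hf.eqOn_deriv_sub hg ⟨hs.1, hs.2.trans ht.2⟩]
  exact mul_sub _ _ _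

lemma caputo_const_mul (c : ℝ) : caputo α (fun s => c * f s) t = c * caputo α f t := by
  simp only [caputo, deriv_const_mul_field, mul_left_comm _ c,
    intervalIntegral.integral_const_mul]

lemma caputo_rpow {β : ℝ} (hα1 : α < 1) (hβ : 0 < β) (ht : 0 < t) :
    caputo α (fun s => s ^ β) t =
      Real.Gamma (β + 1) / Real.Gamma (β + 1 - α) * t ^ (β - α) := by
  have hΓ : Real.Gamma (1 - α) ≠ 0 := (Real.Gamma_pos_of_pos (sub_pos.2 hα1)).ne'
  have integral_eq : ∫ s in (0:ℝ)..t, (t - s) ^ (-α) * deriv (fun s => s ^ β) s =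
      β * ∫ s in (0:ℝ)..t, s ^ (β - 1) * (t - s) ^ ((1 - α) - 1) := by
    rw [← intervalIntegral.integral_const_mul]
    refine intervalIntegral.integral_congr_Ioo_of_le ht.le fun s _ => ?_
    simp only [Real.deriv_rpow_const s β, sub_sub_cancel_left]
    ring
  rw [caputo, integral_eq, integral_rpow_mul_sub_rpow hβ (sub_pos.2 hα1) ht,
    ProbabilityTheory.beta, Real.Gamma_add_one hβ.ne', ← add_sub_assoc, sub_right_comm,
    add_sub_cancel_right]
  field_simp

lemma continuousOn_sub_rpow_neg_mul_sub {a : ℝ} (hα1 : α < 1) (hf : ContinuousOn f (Icc a t))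
    (hft : DifferentiableAt ℝ f t) :
    ContinuousOn (fun s => (t - s) ^ (-α) * (f s - f t)) (Icc a t) := by
  have hα0 : 1 - α ≠ 0 := (sub_pos.2 hα1).ne'
  intro s hs
  rcases hs.2.eq_or_lt with rfl | hst
  · have eq_dslope : ∀ x ∈ Icc a s,
        (s - x) ^ (-α) * (f x - f s) = -(s - x) ^ (1 - α) * dslope f s x := by
      intro x hx
      rcases hx.2.eq_or_lt with rfl | hxs
      · simp only [sub_self, mul_zero, Real.zero_rpow hα0, neg_zero, zero_mul]
      · rw [← sub_smul_dslope f s x, smul_eq_mul, sub_eq_add_neg (1 : ℝ), add_comm,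
          Real.rpow_add_one (sub_pos.2 hxs).ne']
        ring
    refine ContinuousWithinAt.congr (ContinuousAt.continuousWithinAt ?_) eq_dslope
      (eq_dslope s hs)
    exact (ContinuousAt.rpow_const (by fun_prop) (Or.inr (sub_pos.2 hα1).le)).neg.mul
      (continuousAt_dslope_same.2 hft)
  · refine ContinuousWithinAt.mul ?_ ((hf s hs).sub continuousWithinAt_const)
    exact (ContinuousAt.rpow_const (by fun_prop)
      (Or.inl (sub_pos.2 hst).ne')).continuousWithinAt

theorem le_caputo_of_isMaxOn (hα : 0 ≤ α) (hα1 : α < 1) (ht : 0 < t)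
    (hf : ContinuousOn f (Icc 0 t)) (hd : ∀ s ∈ Ioc 0 t, DifferentiableAt ℝ f s)
    (hint : IntervalIntegrable (fun s => (t - s) ^ (-α) * deriv f s) volume 0 t)
    (hmax : IsMaxOn f (Icc 0 t) t) :
    t ^ (-α) / Real.Gamma (1 - α) * (f t - f 0) ≤ caputo α f t := by
  have hderiv : ∀ s ∈ Ioo 0 t, HasDerivAt (fun s => (t - s) ^ (-α) * (f s - f t))
      (α * (t - s) ^ (-α - 1) * (f s - f t) + (t - s) ^ (-α) * deriv f s) s := by
    intro s hs
    have kernel : HasDerivAt (fun x : ℝ => (t - x) ^ (-α)) (α * (t - s) ^ (-α - 1)) s := by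
      simpa using ((hasDerivAt_id s).const_sub t).rpow_const (p := -α)
        (Or.inl (sub_pos.2 hs.2).ne')
    exact kernel.mul ((hd s ⟨hs.1, hs.2.le⟩).hasDerivAt.sub_const (f t))
  have hdrop : ∀ s ∈ Ioo 0 t,
      α * (t - s) ^ (-α - 1) * (f s - f t) + (t - s) ^ (-α) * deriv f s ≤
        (t - s) ^ (-α) * deriv f s := by
    intro s hs
    have hst : 0 ≤ t - s := sub_nonneg.2 hs.2.le
    have hfs : f s - f t ≤ 0 := sub_nonpos.2 (hmax ⟨hs.1.le, hs.2.le⟩)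
    exact add_le_of_nonpos_left (mul_nonpos_of_nonneg_of_nonpos (by positivity) hfs)
  have hle : t ^ (-α) * (f t - f 0) ≤ ∫ s in (0:ℝ)..t, (t - s) ^ (-α) * deriv f s := by
    have := intervalIntegral.sub_le_integral_of_hasDeriv_right_of_le ht.le
      (continuousOn_sub_rpow_neg_mul_sub hα1 hf (hd t ⟨ht, le_rfl⟩))
      (fun s hs => (hderiv s hs).hasDerivWithinAt)
      ((intervalIntegrable_iff_integrableOn_Icc_of_le ht.le).1 hint) hdrop
    simp only [sub_self, mul_zero, sub_zero, zero_sub] at this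
    linarith
  have hΓ : 0 < Real.Gamma (1 - α) := Real.Gamma_pos_of_pos (sub_pos.2 hα1)
  calc t ^ (-α) / Real.Gamma (1 - α) * (f t - f 0)
      = 1 / Real.Gamma (1 - α) * (t ^ (-α) * (f t - f 0)) := by ring
    _ ≤ caputo α f t := mul_le_mul_of_nonneg_left hle (one_div_nonneg.2 hΓ.le)

end Caputo

section SecondDerivativeTest

lemma deriv_deriv_nonpos_of_isLocalMax {f : ℝ → ℝ} {a : ℝ} (hf : ContinuousAt f a)
    (hmax : IsLocalMax f a) : deriv (deriv f) a ≤ 0 := by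
  by_contra! hpos
  have hmin : IsLocalMin f a := isLocalMin_of_deriv_deriv_pos hpos hmax.deriv_eq_zero hf
  have hconst : f =ᶠ[𝓝 a] fun _ => f a := by
    filter_upwards [hmax, hmin] with s hle hge using le_antisymm hle hge
  have : deriv (deriv f) a = 0 := by simpa using hconst.deriv.deriv_eq
  exact hpos.ne' this

variable {E F : Type*} [NormedAddCommGroup E] [NormedSpace ℝ E] [NormedAddCommGroup F]
  [NormedSpace ℝ F] {x : E}

lemma differentiableAt_fderiv_apply {f : E → F} (hf : ContDiffAt ℝ 2 f x) (e : E) :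
    DifferentiableAt ℝ (fun y => fderiv ℝ f y e) x :=
  ((hf.fderiv_right (m := 1) le_rfl).differentiableAt one_ne_zero).clm_apply
    (differentiableAt_const e)

lemma eventually_differentiableAt {f : E → F} (hf : ContDiffAt ℝ 1 f x) :
    ∀ᶠ y in 𝓝 x, DifferentiableAt ℝ f y :=
  (hf.eventually (by simp)).mono fun _ hy => hy.differentiableAt one_ne_zero

lemma fderiv_fderiv_apply_nonpos_of_isLocalMax {w : E → ℝ} (hw : ContDiffAt ℝ 2 w x)
    (hmax : IsLocalMax w x) (e : E) : fderiv ℝ (fun y => fderiv ℝ w y e) x e ≤ 0 := by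
  let line : ℝ → E := fun h => x + h • e
  have hx : line 0 = x := by simp [line]
  have hline (h : ℝ) : HasDerivAt line e h := by
    simpa [line] using ((hasDerivAt_id h).smul_const e).const_add x
  have hderiv : deriv (w ∘ line) =ᶠ[𝓝 0] fun h => fderiv ℝ w (line h) e := by
    rw [← hx] at hw
    filter_upwards [(hline 0).continuousAt.eventually
      (eventually_differentiableAt (hw.of_le one_le_two))] with h hh
    exact (hh.hasFDerivAt.comp_hasDerivAt h (hline h)).deriv
  have hderiv2 : deriv (deriv (w ∘ line)) 0 = fderiv ℝ (fun y => fderiv ℝ w y e) x e := by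
    have hd := (differentiableAt_fderiv_apply hw e).hasFDerivAt
    rw [hderiv.deriv_eq]
    exact (hd.comp_hasDerivAt_of_eq 0 (hline 0) hx.symm).deriv
  rw [← hderiv2]
  rw [← hx] at hw hmax
  exact deriv_deriv_nonpos_of_isLocalMax (hw.continuousAt.comp (hline 0).continuousAt)
    (hmax.comp_continuous (hline 0).continuousAt)

end SecondDerivativeTest

section DivPGrad

variable {n : ℕ} {p w w' : (Fin n → ℝ) → ℝ} {x : Fin n → ℝ}

lemma divPGrad_const (c : ℝ) : divPGrad n p (fun _ => c) x = 0 := by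
  simp [divPGrad]

lemma divPGrad_sub (hp : DifferentiableAt ℝ p x) (hw : ContDiffAt ℝ 2 w x)
    (hw' : ContDiffAt ℝ 2 w' x) :
    divPGrad n p (fun y => w y - w' y) x = divPGrad n p w x - divPGrad n p w' x := by
  simp only [divPGrad]
  rw [← Finset.sum_sub_distrib]
  refine Finset.sum_congr rfl fun j _ => ?_
  have hflux : (fun y => p y * fderiv ℝ (fun y => w y - w' y) y (Pi.single j 1)) =ᶠ[𝓝 x]
      fun y => p y * fderiv ℝ w y (Pi.single j 1) - p y * fderiv ℝ w' y (Pi.single j 1) := by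
    filter_upwards [eventually_differentiableAt (hw.of_le one_le_two),
      eventually_differentiableAt (hw'.of_le one_le_two)] with y hy hy'
    rw [fderiv_fun_sub hy hy', sub_apply, mul_sub]
  rw [hflux.fderiv_eq, fderiv_fun_sub (hp.fun_mul (differentiableAt_fderiv_apply hw _))
    (hp.fun_mul (differentiableAt_fderiv_apply hw' _)), sub_apply]

lemma divPGrad_nonpos_of_isLocalMax (hp : DifferentiableAt ℝ p x) (hpx : 0 ≤ p x)
    (hw : ContDiffAt ℝ 2 w x) (hmax : IsLocalMax w x) : divPGrad n p w x ≤ 0 := by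
  refine Finset.sum_nonpos fun j _ => ?_
  rw [fderiv_fun_mul hp (differentiableAt_fderiv_apply hw _), hmax.fderiv_eq_zero]
  simp only [zero_apply, zero_smul, add_zero, smul_apply, smul_eq_mul]
  exact mul_nonpos_of_nonneg_of_nonpos hpx (fderiv_fderiv_apply_nonpos_of_isLocalMax hw hmax _)

end DivPGrad

namespace IsSolutionTFDE

variable {n : ℕ} {α T : ℝ} {G : Set (Fin n → ℝ)} {p q : (Fin n → ℝ) → ℝ}
  {F F' u u' : (Fin n → ℝ) → ℝ → ℝ} {x : Fin n → ℝ} {t : ℝ}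

lemma continuousOn (hu : IsSolutionTFDE n α T G p q F u) :
    ContinuousOn (fun z : (Fin n → ℝ) × ℝ => u z.1 z.2) (closure G ×ˢ Icc 0 T) :=
  hu.1

lemma contDiffAt (hu : IsSolutionTFDE n α T G p q F u) (hG : IsOpen G) (hx : x ∈ G)
    (ht : t ∈ Ioo 0 T) : ContDiffAt ℝ 2 (fun y => u y t) x :=
  (hu.2.1 t ht).contDiffAt (hG.mem_nhds hx)

lemma caputoRegular (hu : IsSolutionTFDE n α T G p q F u) (hx : x ∈ G) : CaputoRegular T (u x) :=
  hu.2.2.1 x hx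

lemma caputo_eq (hu : IsSolutionTFDE n α T G p q F u) (hx : x ∈ G) (ht : t ∈ Ioo 0 T) :
    caputo α (u x) t = divPGrad n p (fun y => u y t) x - q x * u x t + F x t :=
  hu.2.2.2 x hx t ht

lemma continuousOn_time (hu : IsSolutionTFDE n α T G p q F u) (hx : x ∈ closure G) :
    ContinuousOn (u x) (Icc 0 T) :=
  hu.continuousOn.comp (f := fun s => (x, s)) (by fun_prop) fun _ hs => ⟨hx, hs⟩

lemma sub (hα1 : α < 1) (hT : 0 ≤ T) (hG : IsOpen G) (hp : DifferentiableOn ℝ p G)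
    (hu : IsSolutionTFDE n α T G p q F u) (hu' : IsSolutionTFDE n α T G p q F' u') :
    IsSolutionTFDE n α T G p q (fun x t => F x t - F' x t) (fun x t => u x t - u' x t) := by
  refine ⟨hu.continuousOn.sub hu'.continuousOn, fun t ht => (hu.2.1 t ht).sub (hu'.2.1 t ht),
    fun x hx => (hu.caputoRegular hx).sub hT (hu'.caputoRegular hx), fun x hx t ht => ?_⟩
  rw [caputo_sub hα1 ht (hu.caputoRegular hx) (hu'.caputoRegular hx), hu.caputo_eq hx ht,
    hu'.caputo_eq hx ht, divPGrad_sub (hp.differentiableAt (hG.mem_nhds hx))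
      (hu.contDiffAt hG hx ht) (hu'.contDiffAt hG hx ht)]
  ring

lemma of_spatially_constant {f : ℝ → ℝ} (hf : ContinuousOn f (Icc 0 T)) (hreg : CaputoRegular T f) :
    IsSolutionTFDE n α T G p q (fun x t => caputo α f t + q x * f t) (fun _ t => f t) := by
  refine ⟨hf.comp continuousOn_snd fun z hz => hz.2, fun _ _ => contDiffOn_const,
    fun _ _ => hreg, fun x _ t _ => ?_⟩
  rw [divPGrad_const]
  ring

lemma le_initial_of_isMaxOn (hα : 0 ≤ α) (hα1 : α < 1) (hG : IsOpen G)
    (hp : DifferentiableAt ℝ p x) (hpx : 0 ≤ p x) (hqx : 0 ≤ q x)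
    (hu : IsSolutionTFDE n α T G p q F u) (hx : x ∈ G) (ht : t ∈ Ioo 0 T) (hF : F x t ≤ 0)
    (hux : 0 ≤ u x t) (hspace : IsLocalMax (fun y => u y t) x)
    (htime : IsMaxOn (u x) (Icc 0 t) t) : u x t ≤ u x 0 := by
  have hreg := hu.caputoRegular hx
  have hle_caputo : t ^ (-α) / Real.Gamma (1 - α) * (u x t - u x 0) ≤ caputo α (u x) t :=
    le_caputo_of_isMaxOn hα hα1 ht.1
      ((hu.continuousOn_time (subset_closure hx)).mono (Icc_subset_Icc_right ht.2.le))
      (fun s hs => hreg.differentiableAt ⟨hs.1, hs.2.trans_lt ht.2⟩)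
      (hreg.intervalIntegrable_kernel_mul_deriv hα1 ht) htime
  have hdiv : divPGrad n p (fun y => u y t) x ≤ 0 :=
    divPGrad_nonpos_of_isLocalMax hp hpx (hu.contDiffAt hG hx ht) hspace
  have hcaputo_le : caputo α (u x) t ≤ 0 := by
    rw [hu.caputo_eq hx ht]
    linarith [mul_nonneg hqx hux]
  have hcoeff : 0 < t ^ (-α) / Real.Gamma (1 - α) :=
    div_pos (Real.rpow_pos_of_pos ht.1 _) (Real.Gamma_pos_of_pos (sub_pos.2 hα1))
  exact sub_nonpos.1 (nonpos_of_mul_nonpos_right (hle_caputo.trans hcaputo_le) hcoeff)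

theorem le_of_source_nonpos {M : ℝ} (hα : 0 ≤ α) (hα1 : α < 1) (hT : 0 < T) (hG : IsOpen G)
    (hGb : Bornology.IsBounded G) (hp : DifferentiableOn ℝ p G) (hp0 : ∀ x ∈ G, 0 ≤ p x)
    (hq0 : ∀ x ∈ G, 0 ≤ q x) (hu : IsSolutionTFDE n α T G p q F u)
    (hF : ∀ x ∈ G, ∀ t ∈ Ioo 0 T, F x t ≤ 0) (hM : 0 ≤ M) (hinit : ∀ x ∈ closure G, u x 0 ≤ M)
    (hbdry : ∀ x ∈ frontier G, ∀ t ∈ Icc 0 T, u x t ≤ M) (hx : x ∈ closure G)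
    (ht : t ∈ Icc 0 T) : u x t ≤ M := by
  have before_T : ∀ t ∈ Ico 0 T, u x t ≤ M := by
    intro t₁ ht₁
    obtain ⟨⟨y, t⟩, ⟨hy, ht⟩, hmax⟩ := (hGb.isCompact_closure.prod isCompact_Icc).exists_isMaxOn
      ⟨(x, t₁), hx, right_mem_Icc.2 ht₁.1⟩
      (hu.continuousOn.mono (prod_mono_right (Icc_subset_Icc_right ht₁.2.le)))
    have hle : ∀ z ∈ closure G, ∀ s ∈ Icc 0 t₁, u z s ≤ u y t := fun z hz s hs =>
      hmax (mk_mem_prod hz hs)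
    refine (hle x hx t₁ (right_mem_Icc.2 ht₁.1)).trans ?_
    by_contra! hMu
    have ht0 : t ≠ 0 := by
      rintro rfl
      exact hMu.not_ge (hinit y hy)
    have htT : t ∈ Ioo 0 T := ⟨ht.1.lt_of_ne' ht0, ht.2.trans_lt ht₁.2⟩
    have hyG : y ∈ G := by
      by_contra hyG
      have hyfr : y ∈ frontier G := hG.frontier_eq ▸ ⟨hy, hyG⟩
      exact hMu.not_ge (hbdry y hyfr t ⟨ht.1, htT.2.le⟩)
    have hspace : IsLocalMax (fun z => u z t) y :=
      (hG.eventually_mem hyG).mono fun z hz => hle z (subset_closure hz) t ht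
    have htime : IsMaxOn (u y) (Icc 0 t) t := fun s hs => hle y hy s ⟨hs.1, hs.2.trans ht.2⟩
    have hle_initial : u y t ≤ u y 0 :=
      hu.le_initial_of_isMaxOn hα hα1 hG (hp.differentiableAt (hG.mem_nhds hyG)) (hp0 y hyG)
        (hq0 y hyG) hyG htT (hF y hyG t htT) (hM.trans hMu.le) hspace htime
    exact hMu.not_ge (hle_initial.trans (hinit y hy))
  rw [← closure_Ico hT.ne] at ht
  exact le_on_closure before_T (by simpa only [closure_Ico hT.ne] using hu.continuousOn_time hx)
    continuousOn_const ht

theorem sub_le {ε M : ℝ} (hα : 0 < α) (hα1 : α < 1) (hT : 0 < T) (hG : IsOpen G)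
    (hGb : Bornology.IsBounded G) (hp : DifferentiableOn ℝ p G) (hp0 : ∀ x ∈ G, 0 ≤ p x)
    (hq0 : ∀ x ∈ G, 0 ≤ q x) (hu : IsSolutionTFDE n α T G p q F u)
    (hu' : IsSolutionTFDE n α T G p q F' u') (hε : 0 ≤ ε) (hM : 0 ≤ M)
    (hF : ∀ x ∈ G, ∀ t ∈ Ioo 0 T, F x t - F' x t ≤ ε)
    (hinit : ∀ x ∈ closure G, u x 0 - u' x 0 ≤ M)
    (hbdry : ∀ x ∈ frontier G, ∀ t ∈ Icc 0 T, u x t - u' x t ≤ M) (hx : x ∈ closure G)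
    (ht : t ∈ Icc 0 T) : u x t - u' x t ≤ M + t ^ α / Real.Gamma (1 + α) * ε := by
  have hΓ : 0 < Real.Gamma (1 + α) := Real.Gamma_pos_of_pos (by linarith)
  -- The barrier is chosen so that its Caputo derivative is the constant `ε`.
  let barrier : ℝ → ℝ := fun s => ε / Real.Gamma (1 + α) * s ^ α
  have barrier_nonneg : ∀ s ∈ Icc 0 T, 0 ≤ barrier s := fun s hs =>
    mul_nonneg (div_nonneg hε hΓ.le) (Real.rpow_nonneg hs.1 α)
  have caputo_barrier : ∀ s ∈ Ioo 0 T, caputo α barrier s = ε := by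
    intro s hs
    rw [caputo_const_mul, caputo_rpow hα1 hα hs.1, add_sub_cancel_left, sub_self, Real.Gamma_one,
      Real.rpow_zero, add_comm α 1]
    field_simp
  have hbarrier : IsSolutionTFDE n α T G p q (fun x t => caputo α barrier t + q x * barrier t)
      fun _ t => barrier t :=
    of_spatially_constant
      (continuousOn_const.mul (continuousOn_id.rpow_const fun _ _ => Or.inr hα.le))
      ((caputoRegular_rpow hα).const_mul _)
  have hle : u x t - u' x t - barrier t ≤ M := by
    refine ((hu.sub hα1 hT.le hG hp hu').sub hα1 hT.le hG hp hbarrier).le_of_source_nonpos hα.le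
      hα1 hT hG hGb hp hp0 hq0 (fun y hy s hs => ?_) hM (fun y hy => ?_) (fun y hy s hs => ?_) hx ht
    · rw [caputo_barrier s hs]
      linarith [hF y hy s hs, mul_nonneg (hq0 y hy) (barrier_nonneg s ⟨hs.1.le, hs.2.le⟩)]
    · linarith [hinit y hy, barrier_nonneg 0 (left_mem_Icc.2 hT.le)]
    · linarith [hbdry y hy s hs, barrier_nonneg s hs]
  calc u x t - u' x t ≤ M + barrier t := by linarith
    _ = M + t ^ α / Real.Gamma (1 + α) * ε := by ring

end IsSolutionTFDE

theorem continuous_dependence_TFDE_general {n : ℕ} {α T : ℝ} (hα : 0 < α) (hα1 : α < 1)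
    (hT : 0 < T) {G : Set (Fin n → ℝ)} (hG : IsOpen G) (hGb : Bornology.IsBounded G)
    {p q : (Fin n → ℝ) → ℝ} (hp : DifferentiableOn ℝ p G) (hp0 : ∀ x ∈ G, 0 ≤ p x)
    (hq0 : ∀ x ∈ G, 0 ≤ q x) {F F' u u' : (Fin n → ℝ) → ℝ → ℝ}
    (hu : IsSolutionTFDE n α T G p q F u) (hu' : IsSolutionTFDE n α T G p q F' u') {ε ε₀ ε₁ : ℝ}
    (hF : ∀ x ∈ G, ∀ t ∈ Ioo 0 T, |F x t - F' x t| ≤ ε)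
    (hinit : ∀ x ∈ closure G, |u x 0 - u' x 0| ≤ ε₀)
    (hbdry : ∀ x ∈ frontier G, ∀ t ∈ Icc 0 T, |u x t - u' x t| ≤ ε₁) :
    ∀ x ∈ closure G, ∀ t ∈ Icc 0 T,
      |u x t - u' x t| ≤ max ε₀ ε₁ + T ^ α / Real.Gamma (1 + α) * ε := by
  intro x hx t ht
  obtain ⟨y, hy⟩ : G.Nonempty := closure_nonempty_iff.1 ⟨x, hx⟩
  obtain ⟨s, hs⟩ : (Ioo 0 T).Nonempty := nonempty_Ioo.2 hT
  have hε : 0 ≤ ε := (abs_nonneg _).trans (hF y hy s hs)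
  have hM : 0 ≤ max ε₀ ε₁ := le_max_of_le_left ((abs_nonneg _).trans (hinit x hx))
  have hinit' : ∀ x ∈ closure G, |u x 0 - u' x 0| ≤ max ε₀ ε₁ := fun x hx =>
    le_max_of_le_left (hinit x hx)
  have hbdry' : ∀ x ∈ frontier G, ∀ t ∈ Icc 0 T, |u x t - u' x t| ≤ max ε₀ ε₁ :=
    fun x hx t ht => le_max_of_le_right (hbdry x hx t ht)
  simp only [abs_sub_le_iff] at hF hinit' hbdry'
  calc |u x t - u' x t| ≤ max ε₀ ε₁ + t ^ α / Real.Gamma (1 + α) * ε := abs_sub_le_iff.2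
        ⟨hu.sub_le hα hα1 hT hG hGb hp hp0 hq0 hu' hε hM (fun y hy s hs => (hF y hy s hs).1)
          (fun y hy => (hinit' y hy).1) (fun y hy s hs => (hbdry' y hy s hs).1) hx ht,
        hu'.sub_le hα hα1 hT hG hGb hp hp0 hq0 hu hε hM (fun y hy s hs => (hF y hy s hs).2)
          (fun y hy => (hinit' y hy).2) (fun y hy s hs => (hbdry' y hy s hs).2) hx ht⟩
    _ ≤ max ε₀ ε₁ + T ^ α / Real.Gamma (1 + α) * ε := by
        have htT : t ^ α ≤ T ^ α := Real.rpow_le_rpow ht.1 ht.2 hα.le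
        gcongr

/-- Continuous dependence on the data: if `u` and `u'` solve the
time-fractional diffusion equation with sources `F`, `F'`, initial conditions `u₀`, `u₀'`
and boundary conditions `v`, `v'`, and the data differ by at most `ε`, `ε₀`, `ε₁`
respectively, then `|u − u'| ≤ max{ε₀, ε₁} + (T^α/Γ(1+α)) ε` on `Ḡ×[0,T]`. -/
theorem continuous_dependence_TFDE (n : ℕ) (α T : ℝ) (hα : 0 < α) (hα1 : α < 1) (hT : 0 < T)
    (G : Set (Fin n → ℝ)) (hG : IsOpen G) (hGb : Bornology.IsBounded G)
    (p q : (Fin n → ℝ) → ℝ)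
    (hp : ContDiffOn ℝ 1 p (closure G)) (hppos : ∀ x ∈ closure G, 0 < p x)
    (hq : ContinuousOn q (closure G)) (hqnn : ∀ x ∈ closure G, 0 ≤ q x)
    (F F' : (Fin n → ℝ) → ℝ → ℝ)
    (hF : ContinuousOn (fun z : (Fin n → ℝ) × ℝ => F z.1 z.2) (G ×ˢ Set.Ioo 0 T))
    (hF' : ContinuousOn (fun z : (Fin n → ℝ) × ℝ => F' z.1 z.2) (G ×ˢ Set.Ioo 0 T))
    (u₀ u₀' : (Fin n → ℝ) → ℝ)
    (hu₀ : ContinuousOn u₀ (closure G)) (hu₀' : ContinuousOn u₀' (closure G))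
    (v v' : (Fin n → ℝ) → ℝ → ℝ)
    (hv : ContinuousOn (fun z : (Fin n → ℝ) × ℝ => v z.1 z.2) (frontier G ×ˢ Set.Icc 0 T))
    (hv' : ContinuousOn (fun z : (Fin n → ℝ) × ℝ => v' z.1 z.2) (frontier G ×ˢ Set.Icc 0 T))
    (u u' : (Fin n → ℝ) → ℝ → ℝ)
    (hu : IsSolutionTFDE n α T G p q F u) (hu' : IsSolutionTFDE n α T G p q F' u')
    (huic : ∀ x ∈ closure G, u x 0 = u₀ x) (hu'ic : ∀ x ∈ closure G, u' x 0 = u₀' x)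
    (hubc : ∀ x ∈ frontier G, ∀ t ∈ Set.Icc (0:ℝ) T, u x t = v x t)
    (hu'bc : ∀ x ∈ frontier G, ∀ t ∈ Set.Icc (0:ℝ) T, u' x t = v' x t)
    (ε ε₀ ε₁ : ℝ)
    (hFd : ∀ x ∈ closure G, ∀ t ∈ Set.Icc (0:ℝ) T, |F x t - F' x t| ≤ ε)
    (hu₀d : ∀ x ∈ closure G, |u₀ x - u₀' x| ≤ ε₀)
    (hvd : ∀ x ∈ frontier G, ∀ t ∈ Set.Icc (0:ℝ) T, |v x t - v' x t| ≤ ε₁) :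
    ∀ x ∈ closure G, ∀ t ∈ Set.Icc (0:ℝ) T,
      |u x t - u' x t| ≤ max ε₀ ε₁ + T ^ α / Real.Gamma (1 + α) * ε :=
  continuous_dependence_TFDE_general hα hα1 hT hG hGb
    ((hp.differentiableOn one_ne_zero).mono subset_closure)
    (fun x hx => (hppos x (subset_closure hx)).le) (fun x hx => hqnn x (subset_closure hx)) hu hu'
    (fun x hx t ht => hFd x (subset_closure hx) t (Ioo_subset_Icc_self ht))
    (fun x hx => by simpa only [huic x hx, hu'ic x hx] using hu₀d x hx)
    (fun x hx t ht => by simpa only [hubc x hx t ht, hu'bc x hx t ht] using hvd x hx t ht)
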